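/- arXiv:2507.06225 — 2 statements merged into one kernel-verified Lean document; each statement's English description precedes it below -/
import Mathlib

section
/- Let M and N be matroids with collections S_M ⊆ 2^{E(M)} and S_N ⊆ 2^{E(N)}. Fix b = (B,a) ∈ S•(M) and y = (Y,x) ∈ S•(N). Then in the isomorphism algebra 𝔄•(M,N,S), the equality Σ_{t ∈ S•(N), p_t = x} u_{bt} = Σ_{s ∈ S•(M), p_s = a} u_{sy} holds. -/
open scoped BigOperators TensorProduct

namespace MatroidGame

/-- A "pre-matroid": a finite ground set together with a distinguished collection of
finsets (intended to be the bases). -/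
structure PreMatroid (α : Type*) where
  E : Finset α
  bases : Finset (Finset α)

namespace PreMatroid

variable {α : Type*} [DecidableEq α]

/-- The paper's definition of a matroid: a nonempty collection of `r`-element subsets of the
ground set satisfying the basis exchange axiom. -/
def IsMatroid (M : PreMatroid α) : Prop :=
  M.bases.Nonempty ∧
    (∀ B ∈ M.bases, B ⊆ M.E) ∧
    (∀ B₁ ∈ M.bases, ∀ B₂ ∈ M.bases, B₁.card = B₂.card) ∧
    (∀ B₁ ∈ M.bases, ∀ B₂ ∈ M.bases, ∀ a ∈ B₁ \ B₂,
      ∃ b ∈ B₂ \ B₁, insert b (B₁.erase a) ∈ M.bases)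

/-- A set is independent if it is contained in a basis. -/
def Indep (M : PreMatroid α) (I : Finset α) : Prop :=
  ∃ B ∈ M.bases, I ⊆ B

instance (M : PreMatroid α) : DecidablePred M.Indep := fun I =>
  inferInstanceAs (Decidable (∃ B ∈ M.bases, I ⊆ B))

/-- The rank of a subset: the maximal size of an independent subset of it. -/
def rkSet (M : PreMatroid α) (X : Finset α) : ℕ :=
  (X.powerset.filter fun I => M.Indep I).sup Finset.card

/-- The rank of the matroid. -/
def rk (M : PreMatroid α) : ℕ := M.rkSet M.E

/-- A circuit is a minimal dependent subset of the ground set. -/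
def Circuit (M : PreMatroid α) (C : Finset α) : Prop :=
  C ⊆ M.E ∧ ¬M.Indep C ∧ ∀ D ⊂ C, M.Indep D

/-- A matroid is paving if every circuit has size at least the rank. -/
def Paving (M : PreMatroid α) : Prop := ∀ C, M.Circuit C → M.rk ≤ C.card

/-- The dual matroid: bases are complements of bases. -/
def dual (M : PreMatroid α) : PreMatroid α := ⟨M.E, M.bases.image fun B => M.E \ B⟩

/-- A matroid is sparse paving if both it and its dual are paving. -/
def SparsePaving (M : PreMatroid α) : Prop := M.Paving ∧ M.dual.Paving

/-- The closure of a set. -/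
def cl (M : PreMatroid α) (X : Finset α) : Finset α :=
  M.E.filter fun b => M.rkSet (insert b X) = M.rkSet X

/-- A flat is a closed subset. -/
def IsFlat (M : PreMatroid α) (F : Finset α) : Prop := F ⊆ M.E ∧ M.cl F = F

/-- A hyperplane is a flat of rank `rk M - 1`. -/
def IsHyperplane (M : PreMatroid α) (H : Finset α) : Prop :=
  M.IsFlat H ∧ M.rkSet H = M.rk - 1

/-- A cyclic hyperplane is a hyperplane which is a union of circuits. -/
def IsCyclicHyperplane (M : PreMatroid α) (H : Finset α) : Prop :=
  M.IsHyperplane H ∧ ∀ x ∈ H, ∃ C, M.Circuit C ∧ C ⊆ H ∧ x ∈ C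

/-- A loop is a ground set element contained in no basis. -/
def IsLoop (M : PreMatroid α) (a : α) : Prop := a ∈ M.E ∧ ∀ B ∈ M.bases, a ∉ B

/-- A coloop is a ground set element contained in every basis. -/
def IsColoop (M : PreMatroid α) (a : α) : Prop := a ∈ M.E ∧ ∀ B ∈ M.bases, a ∈ B

def Loopless (M : PreMatroid α) : Prop := ∀ a, ¬M.IsLoop a

/-- A matroid is simple if it has no loops and every rank-1 subset is a singleton. -/
def Simple (M : PreMatroid α) : Prop :=
  M.Loopless ∧ ∀ X ⊆ M.E, M.rkSet X = 1 → X.card = 1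

/-- The restriction `M | Y`: its independent sets are the independent sets of `M` contained
in `Y`, and its bases are the maximal such sets. -/
def restrict (M : PreMatroid α) (Y : Finset α) : PreMatroid α :=
  ⟨Y, Y.powerset.filter fun B =>
      M.Indep B ∧ ∀ I ∈ Y.powerset, M.Indep I → B ⊆ I → I = B⟩

/-- `M` is the free extension of `N` by the new element `e`. -/
def IsFreeExtension (M N : PreMatroid α) (e : α) : Prop :=
  e ∉ N.E ∧ M.E = insert e N.E ∧
    ∀ B : Finset α, B ∈ M.bases ↔
      (B ∈ N.bases ∨ ∃ A : Finset α, N.Indep A ∧ A.card = N.rk - 1 ∧ B = insert e A)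

/-- The uniform matroid of rank `k` on the ground set `E`. -/
def uniform {β : Type*} (E : Finset β) (k : ℕ) : PreMatroid β := ⟨E, E.powersetCard k⟩

/-- The direct sum of two matroids. -/
def directSum {β γ : Type*} [DecidableEq β] [DecidableEq γ] (M : PreMatroid β)
    (N : PreMatroid γ) : PreMatroid (β ⊕ γ) :=
  ⟨M.E.map ⟨Sum.inl, Sum.inl_injective⟩ ∪ N.E.map ⟨Sum.inr, Sum.inr_injective⟩,
    (M.bases ×ˢ N.bases).image fun p =>
      p.1.map ⟨Sum.inl, Sum.inl_injective⟩ ∪ p.2.map ⟨Sum.inr, Sum.inr_injective⟩⟩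

/-- `φ` realizes an isomorphism of matroids: it is a bijection of the ground sets such that a
subset of the ground set is a basis iff its image is a basis. -/
def IsIsoMap {β γ : Type*} [DecidableEq γ] (M : PreMatroid β) (N : PreMatroid γ)
    (φ : β → γ) : Prop :=
  Set.BijOn φ ↑M.E ↑N.E ∧ ∀ B ⊆ M.E, (B ∈ M.bases ↔ B.image φ ∈ N.bases)

/-- Two matroids are isomorphic. -/
def Iso {β γ : Type*} [DecidableEq γ] (M : PreMatroid β) (N : PreMatroid γ) : Prop :=
  ∃ φ : β → γ, M.IsIsoMap N φ

end PreMatroid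

/-- The pointed sets `S•`: pairs `(A, p)` with `A ∈ S` and `p ∈ A`. -/
abbrev PtSet {α : Type*} (S : Finset (Finset α)) : Type _ :=
  {v : Finset α × α // v.1 ∈ S ∧ v.2 ∈ v.1}

/-- The relation `rel` on pointed sets, valued in `{0,1,2,3}`. -/
def relNum {α : Type*} [DecidableEq α] (a b : Finset α × α) : ℕ :=
  if a.1 = b.1 then (if a.2 = b.2 then 0 else 2) else (if a.2 = b.2 then 1 else 3)

/-- `S` covers the ground set `E` if every element of `E` lies in a member of `S`. -/
def Covers {α : Type*} (S : Finset (Finset α)) (E : Finset α) : Prop :=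
  ∀ a ∈ E, ∃ A ∈ S, a ∈ A

noncomputable section

/-- The defining relations of the quantum isomorphism (magic unitary) algebra `𝔖(I,J)`. -/
inductive MagicRel (I J : Type*) [Fintype I] [Fintype J] :
    FreeAlgebra ℂ (I × J) → FreeAlgebra ℂ (I × J) → Prop
  | idem (a : I) (x : J) :
      MagicRel I J (FreeAlgebra.ι ℂ (a, x) * FreeAlgebra.ι ℂ (a, x)) (FreeAlgebra.ι ℂ (a, x))
  | row (a : I) {x y : J} (h : x ≠ y) :
      MagicRel I J (FreeAlgebra.ι ℂ (a, x) * FreeAlgebra.ι ℂ (a, y)) 0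
  | col {a b : I} (x : J) (h : a ≠ b) :
      MagicRel I J (FreeAlgebra.ι ℂ (a, x) * FreeAlgebra.ι ℂ (b, x)) 0
  | rowSum (a : I) : MagicRel I J (∑ x : J, FreeAlgebra.ι ℂ (a, x)) 1
  | colSum (x : J) : MagicRel I J (∑ a : I, FreeAlgebra.ι ℂ (a, x)) 1

/-- The quantum isomorphism algebra `𝔖(I,J)`. -/
abbrev MagicAlgebra (I J : Type*) [Fintype I] [Fintype J] := RingQuot (MagicRel I J)

/-- The generator `u_{a x}` of `𝔖(I,J)`. -/
def magicGen (I J : Type*) [Fintype I] [Fintype J] (a : I) (x : J) : MagicAlgebra I J :=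
  RingQuot.mkAlgHom ℂ (MagicRel I J) (FreeAlgebra.ι ℂ (a, x))

/-- The defining relations of the isomorphism algebra: magic unitary relations together with
`u_{a x} u_{b y} = 0` whenever `rel(a,b) ≠ rel(x,y)`. -/
inductive IsoRel (I J : Type*) [Fintype I] [Fintype J] (rI : I → I → ℕ) (rJ : J → J → ℕ) :
    FreeAlgebra ℂ (I × J) → FreeAlgebra ℂ (I × J) → Prop
  | magic {u v : FreeAlgebra ℂ (I × J)} : MagicRel I J u v → IsoRel I J rI rJ u v
  | mismatch (a b : I) (x y : J) (h : rI a b ≠ rJ x y) :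
      IsoRel I J rI rJ (FreeAlgebra.ι ℂ (a, x) * FreeAlgebra.ι ℂ (b, y)) 0

/-- The generic isomorphism algebra for two relation-valued structures. -/
abbrev IsoAlgebra (I J : Type*) [Fintype I] [Fintype J] (rI : I → I → ℕ)
    (rJ : J → J → ℕ) :=
  RingQuot (IsoRel I J rI rJ)

/-- The generator `u_{a x}` of the isomorphism algebra. -/
def isoGen (I J : Type*) [Fintype I] [Fintype J] (rI : I → I → ℕ) (rJ : J → J → ℕ)
    (a : I) (x : J) : IsoAlgebra I J rI rJ :=
  RingQuot.mkAlgHom ℂ (IsoRel I J rI rJ) (FreeAlgebra.ι ℂ (a, x))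

/-- `rel` as a function on pointed sets. -/
abbrev ptRel {α : Type*} [DecidableEq α] (S : Finset (Finset α)) : PtSet S → PtSet S → ℕ :=
  fun a b => relNum a.val b.val

/-- The isomorphism `∗`-algebra `𝔄•(M,N,S)` associated to the matroid isomorphism game,
presented by magic unitary relations on pointed sets plus the `rel` mismatch relations. -/
abbrev MatIsoAlgebra {α β : Type*} [Fintype α] [Fintype β] [DecidableEq α] [DecidableEq β]
    (S_M : Finset (Finset α)) (S_N : Finset (Finset β)) :=
  IsoAlgebra (PtSet S_M) (PtSet S_N) (ptRel S_M) (ptRel S_N)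

/-- The generator `u_{𝔞 𝔵}` of `𝔄•(M,N,S)`. -/
def matGen {α β : Type*} [Fintype α] [Fintype β] [DecidableEq α] [DecidableEq β]
    (S_M : Finset (Finset α)) (S_N : Finset (Finset β)) (a : PtSet S_M) (x : PtSet S_N) :
    MatIsoAlgebra S_M S_N :=
  isoGen (PtSet S_M) (PtSet S_N) (ptRel S_M) (ptRel S_N) a x

end


open PreMatroid

/-! Multiply the two sides `L = ∑ u_{bt}` and `R = ∑ u_{sy}`. Since `rel` determines whether two
points coincide, the mismatch relations give `u_{bt} u_{sy} = 0` as soon as exactly one of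
`p_t = x`, `p_s = a` holds. Completing `R` to the full column sum `1` thus gives `L = L * R`, and
completing `L` to the full row sum `1` gives `L * R = R`. -/

theorem eq_of_add_eq_one_of_mul_eq_zero {R : Type*} [NonAssocSemiring R] {x x' y y' : R}
    (hx : x + x' = 1) (hy : y + y' = 1) (hxy' : x * y' = 0) (hx'y : x' * y = 0) : x = y :=
  calc
    x = x * (y + y') := by rw [hy, mul_one]
    _ = x * y := by rw [mul_add, hxy', add_zero]
    _ = (x + x') * y := by rw [add_mul, hx'y, add_zero]
    _ = y := by rw [hx, one_mul]

theorem sum_filter_eq_sum_filter_of_mul_eq_zero {R ι κ : Type*} [NonAssocSemiring R]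
    {s : Finset ι} {t : Finset κ} {f : ι → R} {g : κ → R}
    (hf : ∑ i ∈ s, f i = 1) (hg : ∑ k ∈ t, g k = 1)
    (p : ι → Prop) (q : κ → Prop) [DecidablePred p] [DecidablePred q]
    (hfg : ∀ i ∈ s, ∀ k ∈ t, ¬(p i ↔ q k) → f i * g k = 0) :
    ∑ i ∈ s with p i, f i = ∑ k ∈ t with q k, g k := by
  refine eq_of_add_eq_one_of_mul_eq_zero
    ((Finset.sum_filter_add_sum_filter_not s p f).trans hf)
    ((Finset.sum_filter_add_sum_filter_not t q g).trans hg) ?_ ?_ <;>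
  · rw [Finset.sum_mul_sum]
    refine Finset.sum_eq_zero fun i hi ↦ Finset.sum_eq_zero fun k hk ↦ ?_
    rw [Finset.mem_filter] at hi hk
    exact hfg i hi.1 k hk.1 (by tauto)

section IsoAlgebra

variable {I J : Type*} [Fintype I] [Fintype J] (rI : I → I → ℕ) (rJ : J → J → ℕ)

theorem sum_isoGen_row (a : I) : ∑ x, isoGen I J rI rJ a x = 1 := by
  simpa only [isoGen, map_sum, map_one] using
    RingQuot.mkAlgHom_rel ℂ (IsoRel.magic (rI := rI) (rJ := rJ) (MagicRel.rowSum a))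

theorem sum_isoGen_col (x : J) : ∑ a, isoGen I J rI rJ a x = 1 := by
  simpa only [isoGen, map_sum, map_one] using
    RingQuot.mkAlgHom_rel ℂ (IsoRel.magic (rI := rI) (rJ := rJ) (MagicRel.colSum x))

variable {rI rJ}

theorem isoGen_mul_isoGen_of_ne {a b : I} {x y : J} (h : rI a b ≠ rJ x y) :
    isoGen I J rI rJ a x * isoGen I J rI rJ b y = 0 := by
  simpa only [isoGen, map_mul, map_zero] using
    RingQuot.mkAlgHom_rel ℂ (IsoRel.mismatch a b x y h)

theorem sum_filter_isoGen_row_eq_sum_filter_isoGen_col {b : I} {y : J}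
    (p : J → Prop) (q : I → Prop) [DecidablePred p] [DecidablePred q]
    (hpq : ∀ t s, rI b s = rJ t y → (p t ↔ q s)) :
    ∑ t with p t, isoGen I J rI rJ b t = ∑ s with q s, isoGen I J rI rJ s y :=
  sum_filter_eq_sum_filter_of_mul_eq_zero (sum_isoGen_row rI rJ b) (sum_isoGen_col rI rJ y) p q
    fun t _ s _ h ↦ isoGen_mul_isoGen_of_ne (mt (hpq t s) h)

end IsoAlgebra

theorem relNum_le_one_iff {α : Type*} [DecidableEq α] {a b : Finset α × α} :
    relNum a b ≤ 1 ↔ a.2 = b.2 := by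
  unfold relNum
  split_ifs with hS hp hp <;> simp [hp]

theorem stmt14_general {α β : Type*} [Fintype α] [Fintype β] [DecidableEq α] [DecidableEq β]
    (S_M : Finset (Finset α)) (S_N : Finset (Finset β)) (b : PtSet S_M) (y : PtSet S_N) :
    ∑ t with t.val.2 = y.val.2, matGen S_M S_N b t =
      ∑ s with s.val.2 = b.val.2, matGen S_M S_N s y :=
  sum_filter_isoGen_row_eq_sum_filter_isoGen_col _ _
    fun t s (hrel : relNum b.val s.val = relNum t.val y.val) ↦
    calc
      t.val.2 = y.val.2 ↔ relNum t.val y.val ≤ 1 := relNum_le_one_iff.symm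
      _ ↔ relNum b.val s.val ≤ 1 := by rw [hrel]
      _ ↔ b.val.2 = s.val.2 := relNum_le_one_iff
      _ ↔ s.val.2 = b.val.2 := eq_comm

theorem stmt14 {α β : Type*} [Fintype α] [Fintype β] [DecidableEq α] [DecidableEq β]
    (M : PreMatroid α) (N : PreMatroid β) (hM : M.IsMatroid) (hN : N.IsMatroid)
    (S_M : Finset (Finset α)) (S_N : Finset (Finset β))
    (hSM : ∀ A ∈ S_M, A ⊆ M.E) (hSN : ∀ A ∈ S_N, A ⊆ N.E)
    (b : PtSet S_M) (y : PtSet S_N) :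
    (∑ t ∈ Finset.univ.filter (fun t : PtSet S_N => t.val.2 = y.val.2),
        matGen S_M S_N b t) =
      ∑ s ∈ Finset.univ.filter (fun s : PtSet S_M => s.val.2 = b.val.2),
        matGen S_M S_N s y :=
  stmt14_general S_M S_N b y

end MatroidGame
end

section
/- Let M be a matroid with a collection S_M ⊆ 2^{E(M)} such that S_M covers M. Suppose there exist permutations π and τ of S•(M), both different from the identity, such that rel_M(π(a), π(b)) = rel_M(a,b) and rel_M(τ(a), τ(b)) = rel_M(a,b) for all a, b ∈ S•(M), and such that π and τ are disjoint, i.e., for every v ∈ S•(M), π(v) ≠ v implies τ(v) = v, and τ(v) ≠ v implies π(v) = v. Then the algebra 𝔄(M,S) is noncommutative. -/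
open scoped BigOperators TensorProduct

namespace MatroidGame

open PreMatroid

/-!
Let `p` and `q` be idempotents of an algebra, and let `P_π` and `P_τ` be the permutation matrices
of two disjoint automorphisms. The matrix `u = 1 + p (P_π - 1) + q (P_τ - 1)` moves points by `π`
on `p` and by `τ` on `q`. Disjointness means that each row of `u` involves only one of `p` and `q`,
so `u` is a magic unitary even when `p` and `q` do not commute, and it respects every relation
preserved by `π` and `τ`. Thus `u` is a representation of the isomorphism algebra, in which the
generator at `(a, π a)`, for `a` moved by `π`, acts as `p` and the generator at `(b, τ b)`, for `b`
moved by `τ`, acts as `q`. It remains to take for `p` and `q` two noncommuting idempotent `2 × 2`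
matrices.
-/

section UniversalProperty

variable {I J A : Type*} [Fintype I] [Fintype J] [Ring A]

/-- A magic unitary over a ring: a matrix of idempotents, mutually orthogonal along each row and
each column, all of whose rows and columns sum to `1`. No involution is involved. -/
structure IsMagicUnitary (u : Matrix I J A) : Prop where
  isIdempotentElem (a : I) (x : J) : IsIdempotentElem (u a x)
  mul_row_eq_zero (a : I) {x y : J} (h : x ≠ y) : u a x * u a y = 0
  mul_col_eq_zero {a b : I} (x : J) (h : a ≠ b) : u a x * u b x = 0
  sum_row (a : I) : ∑ x, u a x = 1
  sum_col (x : J) : ∑ a, u a x = 1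

/-- A quantum isomorphism between the relation-valued structures `(I, rI)` and `(J, rJ)`, with
coefficients in `A`: a magic unitary whose entries satisfy the relations of `IsoAlgebra`. -/
structure IsQuantumIso (rI : I → I → ℕ) (rJ : J → J → ℕ) (u : Matrix I J A) : Prop
    extends IsMagicUnitary u where
  mul_eq_zero {a b : I} {x y : J} (h : rI a b ≠ rJ x y) : u a x * u b y = 0

variable [Algebra ℂ A] {rI : I → I → ℕ} {rJ : J → J → ℕ} {u : Matrix I J A}

theorem IsMagicUnitary.freeAlgebra_lift_eq (hu : IsMagicUnitary u)
    {v w : FreeAlgebra ℂ (I × J)} (h : MagicRel I J v w) :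
    FreeAlgebra.lift ℂ (fun z : I × J ↦ u z.1 z.2) v =
      FreeAlgebra.lift ℂ (fun z : I × J ↦ u z.1 z.2) w := by
  cases h with
  | idem a x => simpa using (hu.isIdempotentElem a x).eq
  | row a h => simpa using hu.mul_row_eq_zero a h
  | col x h => simpa using hu.mul_col_eq_zero x h
  | rowSum a => simpa using hu.sum_row a
  | colSum x => simpa using hu.sum_col x

theorem IsQuantumIso.freeAlgebra_lift_eq (hu : IsQuantumIso rI rJ u)
    {v w : FreeAlgebra ℂ (I × J)} (h : IsoRel I J rI rJ v w) :
    FreeAlgebra.lift ℂ (fun z : I × J ↦ u z.1 z.2) v =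
      FreeAlgebra.lift ℂ (fun z : I × J ↦ u z.1 z.2) w := by
  cases h with
  | magic h => exact hu.toIsMagicUnitary.freeAlgebra_lift_eq h
  | mismatch a b x y h => simpa using hu.mul_eq_zero h

/-- The representation of the isomorphism algebra sending its generators to the entries of a
quantum isomorphism. -/
noncomputable def IsQuantumIso.lift (hu : IsQuantumIso rI rJ u) : IsoAlgebra I J rI rJ →ₐ[ℂ] A :=
  RingQuot.liftAlgHom ℂ
    ⟨FreeAlgebra.lift ℂ fun z : I × J ↦ u z.1 z.2, fun _ _ ↦ hu.freeAlgebra_lift_eq⟩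

theorem IsQuantumIso.lift_isoGen (hu : IsQuantumIso rI rJ u) (a : I) (x : J) :
    hu.lift (isoGen I J rI rJ a x) = u a x := by
  rw [IsQuantumIso.lift, isoGen, RingQuot.liftAlgHom_mkAlgHom_apply, FreeAlgebra.lift_ι_apply]

end UniversalProperty

section LazyPermMatrix

variable {I A : Type*} [DecidableEq I] [Ring A] {p q : A} {π σ τ : Equiv.Perm I} {a b x y : I}

/-- The matrix acting as the permutation `σ` on `p` and as the identity on `1 - p`. -/
def lazyPermMatrix (p : A) (σ : Equiv.Perm I) : Matrix I I A :=
  (1 - p) • 1 + p • σ.permMatrix A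

theorem lazyPermMatrix_apply (p : A) (σ : Equiv.Perm I) (a x : I) :
    lazyPermMatrix p σ a x = (if a = x then 1 - p else 0) + if σ a = x then p else 0 := by
  simp [lazyPermMatrix, Matrix.one_apply, PEquiv.toMatrix_apply, eq_comm]

theorem lazyPermMatrix_apply_of_fixed (p : A) (h : σ a = a) (x : I) :
    lazyPermMatrix p σ a x = (1 : Matrix I I A) a x := by
  rw [lazyPermMatrix_apply, h, Matrix.one_apply]
  split_ifs <;> simp

theorem lazyPermMatrix_apply_image (p : A) (h : σ a ≠ a) : lazyPermMatrix p σ a (σ a) = p := by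
  simp [lazyPermMatrix_apply, h.symm]

theorem eq_or_eq_of_lazyPermMatrix_ne_zero (h : lazyPermMatrix p σ a x ≠ 0) :
    a = x ∨ σ a = x := by
  contrapose! h
  simp [lazyPermMatrix_apply, h]

theorem lazyPermMatrix_sum_row [Fintype I] (p : A) (σ : Equiv.Perm I) (a : I) :
    ∑ x, lazyPermMatrix p σ a x = 1 := by
  simp [lazyPermMatrix_apply, Finset.sum_add_distrib]

theorem lazyPermMatrix_sum_col [Fintype I] (p : A) (σ : Equiv.Perm I) (x : I) :
    ∑ a, lazyPermMatrix p σ a x = 1 := by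
  have hσ : (∑ a, if σ a = x then p else 0) = p := by
    rw [Equiv.sum_comp σ fun b ↦ if b = x then p else 0]
    simp
  simp [lazyPermMatrix_apply, Finset.sum_add_distrib, hσ]

theorem lazyPermMatrix_apply_mul_apply (hp : IsIdempotentElem p) (σ : Equiv.Perm I)
    (a b x y : I) :
    lazyPermMatrix p σ a x * lazyPermMatrix p σ b y =
      (if a = x ∧ b = y then 1 - p else 0) + if σ a = x ∧ σ b = y then p else 0 := by
  simp only [lazyPermMatrix_apply, add_mul, mul_add, ite_zero_mul_ite_zero, hp.eq, hp.one_sub.eq,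
    hp.mul_one_sub_self, hp.one_sub_mul_self, ite_self, add_zero, zero_add]

theorem isIdempotentElem_lazyPermMatrix_apply (hp : IsIdempotentElem p) (σ : Equiv.Perm I)
    (a x : I) : IsIdempotentElem (lazyPermMatrix p σ a x) := by
  rw [IsIdempotentElem, lazyPermMatrix_apply_mul_apply hp, lazyPermMatrix_apply]
  simp only [and_self]

variable {β : Type*} {r : I → I → β}

theorem lazyPermMatrix_mul_eq_zero (hp : IsIdempotentElem p)
    (hσ : ∀ a b, r (σ a) (σ b) = r a b) (h : r a b ≠ r x y) :
    lazyPermMatrix p σ a x * lazyPermMatrix p σ b y = 0 := by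
  have h_id : ¬(a = x ∧ b = y) := by
    rintro ⟨rfl, rfl⟩
    exact h rfl
  have h_perm : ¬(σ a = x ∧ σ b = y) := by
    rintro ⟨rfl, rfl⟩
    exact h (hσ a b).symm
  rw [lazyPermMatrix_apply_mul_apply hp, if_neg h_id, if_neg h_perm, add_zero]

/-- When `π` fixes `b` and `τ` fixes `a`, every pair `(π ^ i a, τ ^ j b)` is the image of `(a, b)`
under the single automorphism `π ^ i * τ ^ j`. -/
theorem lazyPermMatrix_mul_eq_zero_of_commute (hcomm : Commute π τ)
    (hπ : ∀ a b, r (π a) (π b) = r a b) (hτ : ∀ a b, r (τ a) (τ b) = r a b)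
    (ha : τ a = a) (hb : π b = b) (h : r a b ≠ r x y) :
    lazyPermMatrix p π a x * lazyPermMatrix q τ b y = 0 := by
  have hπb : r (π a) b = r a b := by simpa only [hb] using hπ a b
  have hτa : r a (τ b) = r a b := by simpa only [ha] using hτ a b
  have hτb : π (τ b) = τ b := by
    rw [← Equiv.Perm.mul_apply, hcomm.eq, Equiv.Perm.mul_apply, hb]
  have hπτ : r (π a) (τ b) = r a b := by
    rw [← hτa, ← hπ a (τ b), hτb]
  by_contra hne
  rcases eq_or_eq_of_lazyPermMatrix_ne_zero (left_ne_zero_of_mul hne) with rfl | rfl <;>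
    rcases eq_or_eq_of_lazyPermMatrix_ne_zero (right_ne_zero_of_mul hne) with rfl | rfl
  exacts [h rfl, h hτa.symm, h hπb.symm, h hπτ.symm]

end LazyPermMatrix

section LazyPermMatrix₂

variable {I A : Type*} [DecidableEq I] [Ring A] {p q : A} {π τ : Equiv.Perm I} {a b x y : I}

/-- The matrix `1 + p (P_π - 1) + q (P_τ - 1)`, which moves points by `π` on `p` and by `τ` on `q`;
it is meant for disjoint `π` and `τ`. -/
def lazyPermMatrix₂ (p q : A) (π τ : Equiv.Perm I) : Matrix I I A :=
  lazyPermMatrix p π + lazyPermMatrix q τ - 1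

theorem lazyPermMatrix₂_apply_of_fixed_right (p q : A) (π : Equiv.Perm I) (h : τ a = a) (x : I) :
    lazyPermMatrix₂ p q π τ a x = lazyPermMatrix p π a x := by
  simp [lazyPermMatrix₂, lazyPermMatrix_apply_of_fixed q h]

theorem lazyPermMatrix₂_apply_of_fixed_left (p q : A) (τ : Equiv.Perm I) (h : π a = a) (x : I) :
    lazyPermMatrix₂ p q π τ a x = lazyPermMatrix q τ a x := by
  simp [lazyPermMatrix₂, lazyPermMatrix_apply_of_fixed p h]

theorem lazyPermMatrix₂_mul_eq_zero {β : Type*} {r : I → I → β} (hp : IsIdempotentElem p)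
    (hq : IsIdempotentElem q) (hdisj : π.Disjoint τ) (hπ : ∀ a b, r (π a) (π b) = r a b)
    (hτ : ∀ a b, r (τ a) (τ b) = r a b) (h : r a b ≠ r x y) :
    lazyPermMatrix₂ p q π τ a x * lazyPermMatrix₂ p q π τ b y = 0 := by
  rcases hdisj a with ha | ha <;> rcases hdisj b with hb | hb <;>
    simp only [lazyPermMatrix₂_apply_of_fixed_left, lazyPermMatrix₂_apply_of_fixed_right, ha, hb]
  · exact lazyPermMatrix_mul_eq_zero hq hτ h
  · exact lazyPermMatrix_mul_eq_zero_of_commute hdisj.commute.symm hτ hπ ha hb h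
  · exact lazyPermMatrix_mul_eq_zero_of_commute hdisj.commute hπ hτ ha hb h
  · exact lazyPermMatrix_mul_eq_zero hp hπ h

theorem isIdempotentElem_lazyPermMatrix₂_apply (hp : IsIdempotentElem p)
    (hq : IsIdempotentElem q) (hdisj : π.Disjoint τ) (a x : I) :
    IsIdempotentElem (lazyPermMatrix₂ p q π τ a x) := by
  rcases hdisj a with ha | ha
  · rw [lazyPermMatrix₂_apply_of_fixed_left p q τ ha]
    exact isIdempotentElem_lazyPermMatrix_apply hq τ a x
  · rw [lazyPermMatrix₂_apply_of_fixed_right p q π ha]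
    exact isIdempotentElem_lazyPermMatrix_apply hp π a x

variable [Fintype I]

theorem isMagicUnitary_lazyPermMatrix₂ (hp : IsIdempotentElem p) (hq : IsIdempotentElem q)
    (hdisj : π.Disjoint τ) : IsMagicUnitary (lazyPermMatrix₂ p q π τ) := by
  -- Orthogonality along rows and columns is compatibility with the equality relation.
  have mul_eq_zero {a b x y : I} (h : (a = b) ≠ (x = y)) :
      lazyPermMatrix₂ p q π τ a x * lazyPermMatrix₂ p q π τ b y = 0 :=
    lazyPermMatrix₂_mul_eq_zero (r := Eq) hp hq hdisj (fun _ _ ↦ propext π.apply_eq_iff_eq)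
      (fun _ _ ↦ propext τ.apply_eq_iff_eq) h
  exact
    { isIdempotentElem := isIdempotentElem_lazyPermMatrix₂_apply hp hq hdisj
      mul_row_eq_zero := fun a x y h ↦ mul_eq_zero (by simpa using h)
      mul_col_eq_zero := fun {a b} x h ↦ mul_eq_zero (by simpa using h)
      sum_row := fun a ↦ by
        simp [lazyPermMatrix₂, Finset.sum_add_distrib, Finset.sum_sub_distrib,
          lazyPermMatrix_sum_row, Matrix.one_apply]
      sum_col := fun x ↦ by
        simp [lazyPermMatrix₂, Finset.sum_add_distrib, Finset.sum_sub_distrib,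
          lazyPermMatrix_sum_col, Matrix.one_apply] }

theorem isQuantumIso_lazyPermMatrix₂ {r : I → I → ℕ} (hp : IsIdempotentElem p)
    (hq : IsIdempotentElem q) (hdisj : π.Disjoint τ) (hπ : ∀ a b, r (π a) (π b) = r a b)
    (hτ : ∀ a b, r (τ a) (τ b) = r a b) : IsQuantumIso r r (lazyPermMatrix₂ p q π τ) where
  toIsMagicUnitary := isMagicUnitary_lazyPermMatrix₂ hp hq hdisj
  mul_eq_zero := lazyPermMatrix₂_mul_eq_zero hp hq hdisj hπ hτ

end LazyPermMatrix₂

theorem exists_isIdempotentElem_not_commute (R : Type*) [Semiring R] [Nontrivial R] :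
    ∃ p q : Matrix (Fin 2) (Fin 2) R,
      IsIdempotentElem p ∧ IsIdempotentElem q ∧ ¬Commute p q := by
  refine ⟨!![1, 0; 0, 0], !![1, 1; 0, 0], ?_, ?_, fun h ↦ ?_⟩
  · ext i j; fin_cases i <;> fin_cases j <;> simp
  · ext i j; fin_cases i <;> fin_cases j <;> simp
  · simpa using congrFun₂ h.eq 0 1

theorem stmt18_general {I : Type*} [Fintype I] (r : I → I → ℕ) {π τ : Equiv.Perm I}
    (hπ : π ≠ 1) (hτ : τ ≠ 1) (hπr : ∀ a b, r (π a) (π b) = r a b)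
    (hτr : ∀ a b, r (τ a) (τ b) = r a b) (hdisj : π.Disjoint τ) :
    ∃ x y : IsoAlgebra I I r r, x * y ≠ y * x := by
  classical
  obtain ⟨a, ha⟩ : ∃ a, π a ≠ a := DFunLike.ne_iff.1 hπ
  obtain ⟨b, hb⟩ : ∃ b, τ b ≠ b := DFunLike.ne_iff.1 hτ
  obtain ⟨p, q, hp, hq, hpq⟩ := exists_isIdempotentElem_not_commute ℂ
  let F := (isQuantumIso_lazyPermMatrix₂ hp hq hdisj hπr hτr).lift
  have hFa : F (isoGen I I r r a (π a)) = p := by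
    rw [IsQuantumIso.lift_isoGen,
      lazyPermMatrix₂_apply_of_fixed_right p q π ((hdisj a).resolve_left ha),
      lazyPermMatrix_apply_image p ha]
  have hFb : F (isoGen I I r r b (τ b)) = q := by
    rw [IsQuantumIso.lift_isoGen,
      lazyPermMatrix₂_apply_of_fixed_left p q τ ((hdisj b).resolve_right hb),
      lazyPermMatrix_apply_image q hb]
  refine ⟨isoGen I I r r a (π a), isoGen I I r r b (τ b), fun hxy ↦ hpq ?_⟩
  simpa only [map_mul, hFa, hFb, commute_iff_eq] using congrArg F hxy

theorem stmt18 {α : Type*} [Fintype α] [DecidableEq α]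
    (M : PreMatroid α) (hM : M.IsMatroid)
    (S : Finset (Finset α)) (hS : ∀ A ∈ S, A ⊆ M.E) (hcov : Covers S M.E)
    (π τ : Equiv.Perm (PtSet S)) (hπ : π ≠ 1) (hτ : τ ≠ 1)
    (hπrel : ∀ a b : PtSet S, relNum (π a).val (π b).val = relNum a.val b.val)
    (hτrel : ∀ a b : PtSet S, relNum (τ a).val (τ b).val = relNum a.val b.val)
    (hdisj : ∀ v : PtSet S, (π v ≠ v → τ v = v) ∧ (τ v ≠ v → π v = v)) :
    ∃ x y : MatIsoAlgebra S S, x * y ≠ y * x := by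
  exact stmt18_general (ptRel S) hπ hτ hπrel hτrel fun v ↦ or_iff_not_imp_left.2 (hdisj v).1

end MatroidGame
end
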